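/- arXiv:1507.02853 — 4 statements merged into one kernel-verified Lean document; each statement's English description precedes it below -/
import Mathlib

section
/- Let p be a prime, let x : ZMod p with x ≠ 0, let s : List (ZMod p), and let i ≤ j ≤ s.length. Then the fingerprint of the substring s[i..j) satisfies φ_x((s.take j).drop i) = (x⁻¹)^i * (φ_x(s.take j) − φ_x(s.take i)). -/
/-- The Karp–Rabin fingerprint of a list `s` over `ZMod p` at evaluation point `x`:
`φ_x(s) = ∑_{k < s.length} s[k] * x^k`. -/
def karpRabin {p : ℕ} (x : ZMod p) (s : List (ZMod p)) : ZMod p :=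
  ∑ k ∈ Finset.range s.length, s.getD k 0 * x ^ k

section

variable {n : ℕ} (x : ZMod n)

lemma karpRabin_nil : karpRabin x [] = 0 :=
  Finset.sum_range_zero _

lemma karpRabin_append (s t : List (ZMod n)) :
    karpRabin x (s ++ t) = karpRabin x s + x ^ s.length * karpRabin x t := by
  unfold karpRabin
  rw [List.length_append, Finset.sum_range_add, Finset.mul_sum]
  congr 1
  · refine Finset.sum_congr rfl fun k hk => ?_
    rw [List.getD_append _ _ _ _ (Finset.mem_range.mp hk)]
  · refine Finset.sum_congr rfl fun k _ => ?_
    rw [List.getD_append_right _ _ _ _ (Nat.le_add_right _ _), Nat.add_sub_cancel_left, pow_add,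
      mul_left_comm]

lemma karpRabin_take_add_pow_mul_karpRabin_drop (s : List (ZMod n)) (i : ℕ) :
    karpRabin x (s.take i) + x ^ i * karpRabin x (s.drop i) = karpRabin x s := by
  rcases le_total i s.length with hi | hi
  · have happend := karpRabin_append x (s.take i) (s.drop i)
    rw [List.take_append_drop, List.length_take_of_le hi] at happend
    exact happend.symm
  · rw [List.take_of_length_le hi, List.drop_of_length_le hi, karpRabin_nil, mul_zero, add_zero]

variable {x}

theorem karpRabin_infix_general (hx : IsUnit x) (s : List (ZMod n)) {i j : ℕ} (hij : i ≤ j) :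
    karpRabin x ((s.take j).drop i) =
      (x⁻¹) ^ i * (karpRabin x (s.take j) - karpRabin x (s.take i)) := by
  have hsplit : karpRabin x (s.take i) + x ^ i * karpRabin x ((s.take j).drop i) =
      karpRabin x (s.take j) := by
    simpa only [List.take_take, min_eq_left hij] using
      karpRabin_take_add_pow_mul_karpRabin_drop x (s.take j) i
  have hcancel : (x⁻¹) ^ i * x ^ i = 1 := by
    rw [← mul_pow, ZMod.inv_mul_of_unit x hx, one_pow]
  rw [← hsplit, add_sub_cancel_left, ← mul_assoc, hcancel, one_mul]

end

theorem karpRabin_infix (p : ℕ) (hp : p.Prime) (x : ZMod p) (hx : x ≠ 0)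
    (s : List (ZMod p)) (i j : ℕ) (hij : i ≤ j) (hj : j ≤ s.length) :
    karpRabin x ((s.take j).drop i) =
      (x⁻¹) ^ i * (karpRabin x (s.take j) - karpRabin x (s.take i)) := by
  have : Fact p.Prime := ⟨hp⟩
  exact karpRabin_infix_general hx.isUnit s hij
end

section
/- Let p be a prime, let x : ZMod p with x ≠ 0, let s : List (ZMod p), and let a ≤ s.length. Then the fingerprint of the list obtained by deleting the first a characters satisfies φ_x(s.drop a) = (x⁻¹)^a * (φ_x(s) − φ_x(s.take a)). -/
/-- The value at `x` of the polynomial with coefficient list `s`, lowest degree first. This is the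
fingerprint over an arbitrary semiring; `karpRabin` is definitionally its instance at `ZMod p`. -/
def fingerprint {R : Type*} [Semiring R] (x : R) (s : List R) : R :=
  ∑ k ∈ Finset.range s.length, s.getD k 0 * x ^ k

section Semiring

variable {R : Type*} [Semiring R] (x : R)

theorem fingerprint_nil : fingerprint x [] = 0 :=
  Finset.sum_range_zero _

theorem fingerprint_cons (c : R) (s : List R) :
    fingerprint x (c :: s) = c + fingerprint x s * x := by
  simp only [fingerprint, List.length_cons, Finset.sum_range_succ', List.getD_cons_succ,
    List.getD_cons_zero, pow_succ, pow_zero, mul_one, ← mul_assoc, ← Finset.sum_mul, add_comm]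

theorem fingerprint_take_add_fingerprint_drop_mul_pow (s : List R) (a : ℕ) :
    fingerprint x (s.take a) + fingerprint x (s.drop a) * x ^ a = fingerprint x s := by
  induction s generalizing a with
  | nil => simp [fingerprint_nil]
  | cons c s ih =>
    cases a with
    | zero => simp [fingerprint_nil]
    | succ a =>
      rw [List.take_succ_cons, List.drop_succ_cons, fingerprint_cons, fingerprint_cons, ← ih a,
        add_mul, pow_succ, mul_assoc, add_assoc]

end Semiring

theorem karpRabin_drop_general {R : Type*} [CommRing R] {x y : R} (hyx : y * x = 1)
    (s : List R) (a : ℕ) :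
    fingerprint x (s.drop a) = y ^ a * (fingerprint x s - fingerprint x (s.take a)) := by
  have hpow : y ^ a * x ^ a = 1 := pow_mul_pow_eq_one a hyx
  calc fingerprint x (s.drop a)
      = y ^ a * (fingerprint x (s.drop a) * x ^ a) := by
        rw [mul_left_comm, hpow, mul_one]
    _ = y ^ a * (fingerprint x s - fingerprint x (s.take a)) := by
        rw [← fingerprint_take_add_fingerprint_drop_mul_pow x s a, add_sub_cancel_left]

theorem karpRabin_drop (p : ℕ) (hp : p.Prime) (x : ZMod p) (hx : x ≠ 0)
    (s : List (ZMod p)) (a : ℕ) (ha : a ≤ s.length) :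
    karpRabin x (s.drop a) = (x⁻¹) ^ a * (karpRabin x s - karpRabin x (s.take a)) := by
  have : Fact p.Prime := ⟨hp⟩
  exact karpRabin_drop_general (inv_mul_cancel₀ hx) s a
end

section
/- Let p be a prime and let s, t : List (ZMod p) be two lists with s.length = t.length and s ≠ t. Then the number of elements x : ZMod p for which φ_x(s) = φ_x(t) is at most s.length − 1; that is, (Finset.univ.filter (fun x : ZMod p => φ_x(s) = φ_x(t))).card ≤ s.length − 1. -/
/-! A fingerprint is a value of the polynomial whose coefficients are the letters of the string.
Distinct strings of length `n` give distinct polynomials of degree less than `n`, and over a domain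
such polynomials cannot agree at `n` points. -/

theorem eval_ofFn {R : Type*} [Semiring R] [DecidableEq R] {n : ℕ} (v : Fin n → R)
    (x : R) : (Polynomial.ofFn n v).eval x = ∑ i, v i * x ^ (i : ℕ) := by
  simp only [Polynomial.ofFn_eq_sum_monomial, Polynomial.eval_finsetSum, Polynomial.eval_monomial]

theorem card_lt_of_sum_mul_pow_eq {R : Type*} [CommRing R] [IsDomain R] {n : ℕ}
    {v w : Fin n → R} (hvw : v ≠ w) {Z : Finset R}
    (hZ : ∀ x ∈ Z, ∑ i, v i * x ^ (i : ℕ) = ∑ i, w i * x ^ (i : ℕ)) : Z.card < n := by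
  classical
  contrapose! hvw
  have degree_lt (u : Fin n → R) : (Polynomial.ofFn n u).degree < Z.card :=
    (Polynomial.ofFn_degree_lt u).trans_le (Nat.cast_le.mpr hvw)
  refine Polynomial.injective_ofFn n ?_
  refine Polynomial.eq_of_degrees_lt_of_eval_finset_eq Z (degree_lt v) (degree_lt w) fun x hx ↦ ?_
  simpa only [eval_ofFn] using hZ x hx

theorem karpRabin_ofFn {p n : ℕ} (x : ZMod p) (v : Fin n → ZMod p) :
    karpRabin x (List.ofFn v) = ∑ i, v i * x ^ (i : ℕ) := by
  simp [karpRabin, Finset.sum_range]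

open Classical in
theorem karpRabin_collisions_le (p : ℕ) [Fact p.Prime] (s t : List (ZMod p))
    (hlen : s.length = t.length) (hne : s ≠ t) :
    (Finset.univ.filter (fun x : ZMod p => karpRabin x s = karpRabin x t)).card ≤
      s.length - 1 := by
  cases s using List.ofFnRec with | _ n v
  cases t using List.ofFnRec with | _ m w
  obtain rfl : n = m := by simpa only [List.length_ofFn] using hlen
  have hvw : v ≠ w := fun h ↦ hne (congrArg List.ofFn h)
  simp only [karpRabin_ofFn, List.length_ofFn]
  exact Nat.le_pred_of_lt (card_lt_of_sum_mul_pow_eq hvw fun x hx ↦ (Finset.mem_filter.mp hx).2)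
end

section
/- Let N, a, b be real numbers with 2 ≤ a ≤ N and 2 ≤ b ≤ N. If ⌊Real.logb 2 (Real.logb 2 N) − Real.logb 2 (Real.logb 2 a)⌋ = ⌊Real.logb 2 (Real.logb 2 N) − Real.logb 2 (Real.logb 2 b)⌋, then Real.sqrt b ≤ a. -/
/-!
Raising a number to the power `β` increases its iterated logarithm `log_β log_β` by exactly `1`,
while equal floors force the iterated logarithms of `a` and `b` to differ by less than `1`. As the
iterated logarithm is strictly increasing on `(1, ∞)`, this gives `b < a ^ β`.
-/

open Real

theorem strictMonoOn_logb_logb {β : ℝ} (hβ : 1 < β) :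
    StrictMonoOn (fun x ↦ logb β (logb β x)) (Set.Ioi 1) :=
  (strictMonoOn_logb hβ).comp
    ((strictMonoOn_logb hβ).mono (Set.Ioi_subset_Ioi zero_le_one))
    fun _ hx ↦ logb_pos hβ hx

theorem logb_logb_rpow {β x y : ℝ} (hx : 0 < x) (hy : y ≠ 0) (hlog : logb β x ≠ 0) :
    logb β (logb β (x ^ y)) = logb β y + logb β (logb β x) := by
  rw [logb_rpow_eq_mul_logb_of_pos hx, logb_mul hy hlog]

theorem lt_rpow_of_logb_logb_lt_one_add {β a b : ℝ} (hβ : 1 < β) (ha : 1 < a) (hb : 1 < b)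
    (h : logb β (logb β b) < 1 + logb β (logb β a)) : b < a ^ β := by
  have hβ₀ : 0 < β := one_pos.trans hβ
  have hpow : logb β (logb β (a ^ β)) = 1 + logb β (logb β a) := by
    rw [logb_logb_rpow (one_pos.trans ha) hβ₀.ne' (logb_pos hβ ha).ne', logb_self_eq_one hβ]
  exact ((strictMonoOn_logb_logb hβ).lt_iff_lt hb (one_lt_rpow ha hβ₀)).mp (h.trans_eq hpow.symm)

theorem same_level_sqrt_general {β c a b : ℝ} (hβ : 1 < β) (ha : 1 < a) (hb : 1 < b)
    (hlevel : ⌊c - logb β (logb β a)⌋ = ⌊c - logb β (logb β b)⌋) :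
    b ^ (1 / β) < a := by
  have hclose : (c - logb β (logb β a)) - (c - logb β (logb β b)) < 1 :=
    (abs_lt.mp (Int.abs_sub_lt_one_of_floor_eq_floor hlevel)).2
  have hlt : b < a ^ β := lt_rpow_of_logb_logb_lt_one_add hβ ha hb (by linarith)
  rw [one_div]
  exact (rpow_inv_lt_iff_of_pos (by linarith) (by linarith) (by linarith)).mpr hlt

theorem same_level_sqrt (N a b : ℝ) (h2a : 2 ≤ a) (haN : a ≤ N) (h2b : 2 ≤ b) (hbN : b ≤ N)
    (hlevel : ⌊Real.logb 2 (Real.logb 2 N) - Real.logb 2 (Real.logb 2 a)⌋ =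
      ⌊Real.logb 2 (Real.logb 2 N) - Real.logb 2 (Real.logb 2 b)⌋) :
    Real.sqrt b ≤ a := by
  rw [sqrt_eq_rpow]
  exact (same_level_sqrt_general one_lt_two (by linarith) (by linarith) hlevel).le
end
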